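/- Let σ₀ be the alternating trilinear form on Sym³W₃ (W₃ three-dimensional with basis x,y,z) determined by σ₀(u³,v³,w³) = det(u,v,w)³. For monomials m_r = x^{i_r} y^{j_r} z^{k_r} (r = 1,2,3) of degree 3, one has σ₀(m₁, m₂, m₃) ≠ 0 if and only if i₁+i₂+i₃ = j₁+j₂+j₃ = k₁+k₂+k₃ = 3 and not all three monomials equal xyz. -/

import Mathlib

open MvPolynomial

/-- The cube `w³` of a vector `w ∈ W₃`, as a polynomial (element of `Sym³W₃`). -/
noncomputable def cubePoly (w : Fin 3 → ℂ) : MvPolynomial (Fin 3) ℂ :=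
  (∑ i, C (w i) * X i) ^ 3

/-- The monomial `x^{v 0} y^{v 1} z^{v 2}` of `Sym³W₃` (for `v 0 + v 1 + v 2 = 3`). -/
noncomputable def monPoly (v : Fin 3 → ℕ) : MvPolynomial (Fin 3) ℂ :=
  X 0 ^ v 0 * X 1 ^ v 1 * X 2 ^ v 2

/-!
Write `A` for the generic `3 × 3` matrix. Expanding the cubes of linear forms by the multinomial
theorem, `σ₀(u³, v³, w³) = det(u, v, w)³` says that `σ₀(m₁, m₂, m₃)` is, up to a nonzero multinomial
factor, the coefficient in `det A ^ 3` of the monomial whose exponent matrix `E` has the exponents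
of `m₁, m₂, m₃` as rows. By the Leibniz formula this coefficient is a sum over the ways of writing
`E` as a sum of three permutation matrices, with signs.

Such a way exists if and only if all row and column sums of `E` are `3` (Birkhoff). An entry of a
`3 × 3` matrix is hit by exactly two permutations, which differ by a transposition, so the only
linear relation between the six permutation matrices is the one with coefficients `sign π`. A zero
entry of `E` therefore makes the decomposition unique and the coefficient nonzero. The only `E` with
line sums `3` and no zero entry is the all-ones matrix; it has two equal rows, so its coefficient
vanishes since `det A ^ 3` changes sign when these are exchanged.
-/

open Finset Equiv Matrix

/-- The exponent of the monomial `∏ X (i, j) ^ E i j` in the entries of a generic matrix. -/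
noncomputable def matrixExponent {m n : Type*} [Finite m] [Finite n] :
    Matrix m n ℕ ≃+ (m × n →₀ ℕ) where
  toFun E := Finsupp.equivFunOnFinite.symm fun p => E p.1 p.2
  invFun s := of fun i j => s (i, j)
  left_inv _ := rfl
  right_inv _ := Finsupp.ext fun _ => rfl
  map_add' _ _ := Finsupp.ext fun _ => rfl

@[simp]
theorem matrixExponent_apply {m n : Type*} [Finite m] [Finite n] (E : Matrix m n ℕ) (p : m × n) :
    matrixExponent E p = E p.1 p.2 := rfl

theorem monomial_matrixExponent {m n R : Type*} [Fintype m] [Fintype n] [CommSemiring R]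
    (E : Matrix m n ℕ) (a : R) :
    monomial (matrixExponent E) a = C a * ∏ i, ∏ j, X (i, j) ^ E i j := by
  rw [monomial_eq, Finsupp.prod_fintype _ _ fun _ => pow_zero _, Fintype.prod_prod_type]
  rfl

section Polarization

variable {ι κ R : Type*} [Fintype κ]

theorem sum_C_mul_X_pow [DecidableEq κ] [CommSemiring R] (w : κ → R) (d : ℕ) :
    (∑ j, C (w j) * X j : MvPolynomial κ R) ^ d =
      ∑ k ∈ piAntidiag univ d, (Nat.multinomial univ k * ∏ j, w j ^ k j : R) • ∏ j, X j ^ k j := by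
  rw [sum_pow_eq_sum_piAntidiag]
  refine sum_congr rfl fun k _ => ?_
  simp only [smul_eq_C_mul, map_mul, map_natCast, map_prod, map_pow, mul_pow, prod_mul_distrib,
    mul_assoc]

theorem map_sum_C_mul_X_pow [Fintype ι] [DecidableEq ι] [DecidableEq κ] [CommSemiring R]
    (σ : MultilinearMap R (fun _ : ι => MvPolynomial κ R) R) (w : ι → κ → R) (d : ℕ) :
    σ (fun i => (∑ j, C (w i j) * X j) ^ d) =
      eval (fun p => w p.1 p.2) (∑ E ∈ Fintype.piFinset fun _ : ι => piAntidiag univ d,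
        monomial (matrixExponent (of E))
          ((∏ i, (Nat.multinomial univ (E i) : R)) * σ fun i => ∏ j, X j ^ E i j)) := by
  simp only [sum_C_mul_X_pow, σ.map_sum_finset, σ.map_smul_univ, map_sum, monomial_matrixExponent,
    map_mul, eval_C, map_prod, map_pow, eval_X, prod_mul_distrib, smul_eq_mul, of_apply]
  exact sum_congr rfl fun E _ => mul_right_comm _ _ _

variable [CommRing R] [IsDomain R]

theorem prod_multinomial_mul_map_prod_X_pow [Fintype ι] [Infinite R]
    (σ : MultilinearMap R (fun _ : ι => MvPolynomial κ R) R) (d : ℕ) (Q : MvPolynomial (ι × κ) R)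
    (hσ : ∀ w : ι → κ → R,
      σ (fun i => (∑ j, C (w i j) * X j) ^ d) = eval (fun p => w p.1 p.2) Q)
    (E : ι → κ → ℕ) (hE : ∀ i, ∑ j, E i j = d) :
    (∏ i, (Nat.multinomial univ (E i) : R)) * σ (fun i => ∏ j, X j ^ E i j) =
      coeff (matrixExponent (of E)) Q := by
  classical
  have hQ : Q = ∑ E ∈ Fintype.piFinset fun _ : ι => piAntidiag univ d,
      monomial (matrixExponent (of E))
        ((∏ i, (Nat.multinomial univ (E i) : R)) * σ fun i => ∏ j, X j ^ E i j) :=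
    MvPolynomial.funext fun x =>
      (hσ fun i j => x (i, j)).symm.trans (map_sum_C_mul_X_pow σ _ d)
  have hmem : E ∈ Fintype.piFinset fun _ : ι => piAntidiag univ d := by
    simp [Fintype.mem_piFinset, hE]
  simp only [hQ, coeff_sum, coeff_monomial, EmbeddingLike.apply_eq_iff_eq]
  rw [sum_ite_eq' _ E, if_pos hmem]

theorem map_prod_X_pow_ne_zero_iff [Finite ι] [CharZero R]
    (σ : MultilinearMap R (fun _ : ι => MvPolynomial κ R) R) (d : ℕ) (Q : MvPolynomial (ι × κ) R)
    (hσ : ∀ w : ι → κ → R,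
      σ (fun i => (∑ j, C (w i j) * X j) ^ d) = eval (fun p => w p.1 p.2) Q)
    (E : ι → κ → ℕ) (hE : ∀ i, ∑ j, E i j = d) :
    σ (fun i => ∏ j, X j ^ E i j) ≠ 0 ↔ coeff (matrixExponent (of E)) Q ≠ 0 := by
  cases nonempty_fintype ι
  have hmult : (∏ i, (Nat.multinomial univ (E i) : R)) ≠ 0 :=
    prod_ne_zero_iff.2 fun i _ => Nat.cast_ne_zero.2 (Nat.multinomial_pos _ _).ne'
  rw [← prod_multinomial_mul_map_prod_X_pow σ d Q hσ E hE, mul_ne_zero_iff_left hmult]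

end Polarization

section PermMatrix

variable {n R : Type*} [Fintype n]

theorem sum_smul_permMatrix_apply [DecidableEq n] [Semiring R] (k : Perm n → R) (i j : n) :
    (∑ π, k π • π.permMatrix R) i j = ∑ π with π i = j, k π := by
  simp [Matrix.sum_apply, sum_filter]

theorem sum_col_sum_smul_permMatrix [DecidableEq n] [Semiring R] (k : Perm n → R) (j : n) :
    ∑ i, (∑ π, k π • π.permMatrix R) i j = ∑ π, k π := by
  simp only [sum_smul_permMatrix_apply, sum_filter]
  rw [sum_comm]
  simp [← Equiv.eq_symm_apply]

theorem exists_perm_forall_ne_zero (E : Matrix n n ℕ) {d : ℕ} (hd : d ≠ 0)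
    (hrow : ∀ i, ∑ j, E i j = d) (hcol : ∀ j, ∑ i, E i j = d) :
    ∃ π : Perm n, ∀ i, E i (π i) ≠ 0 := by
  classical
  have hd' : (d : ℚ) ≠ 0 := Nat.cast_ne_zero.2 hd
  have hmem : (d : ℚ)⁻¹ • E.map (Nat.cast : ℕ → ℚ) ∈ doublyStochastic ℚ n := by
    simp only [mem_doublyStochastic_iff_sum, Matrix.smul_apply, Matrix.map_apply, smul_eq_mul,
      ← mul_sum, ← Nat.cast_sum, hrow, hcol, inv_mul_cancel₀ hd', implies_true, and_true]
    exact fun i j => by positivity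
  obtain ⟨w, hw, hw1, hwE⟩ := exists_eq_sum_perm_of_mem_doublyStochastic hmem
  obtain ⟨π, -, hπ⟩ := exists_ne_zero_of_sum_ne_zero (hw1.trans_ne one_ne_zero)
  refine ⟨π, fun i hi => hπ ?_⟩
  have hsum : ∑ ρ with ρ i = π i, w ρ = 0 := by
    rw [← sum_smul_permMatrix_apply, hwE]
    simp [hi]
  exact (sum_eq_zero_iff_of_nonneg fun ρ _ => hw ρ).1 hsum π (by simp)

theorem exists_sum_smul_permMatrix_eq [DecidableEq n] (d : ℕ) (E : Matrix n n ℕ)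
    (hrow : ∀ i, ∑ j, E i j = d) (hcol : ∀ j, ∑ i, E i j = d) :
    ∃ k : Perm n → ℕ, ∑ π, k π = d ∧ ∑ π, k π • π.permMatrix ℕ = E := by
  induction d generalizing E with
  | zero =>
    refine ⟨0, by simp, Matrix.ext fun i j => ?_⟩
    simpa using ((sum_eq_zero_iff.1 (hrow i)) j (mem_univ j)).symm
  | succ d ih =>
    obtain ⟨π, hπ⟩ := exists_perm_forall_ne_zero E d.succ_ne_zero hrow hcol
    have hle (i j : n) : π.permMatrix ℕ i j ≤ E i j := by
      by_cases h : π i = j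
      · simpa [h] using Nat.one_le_iff_ne_zero.2 (h ▸ hπ i)
      · simp [h]
    obtain ⟨F, rfl⟩ : ∃ F, E = π.permMatrix ℕ + F :=
      ⟨E - π.permMatrix ℕ, Matrix.ext fun i j => (Nat.add_sub_of_le (hle i j)).symm⟩
    have hπ := permMatrix_mem_doublyStochastic (R := ℕ) (σ := π)
    simp only [Matrix.add_apply, sum_add_distrib, sum_row_of_mem_doublyStochastic hπ,
      sum_col_of_mem_doublyStochastic hπ, add_comm 1, add_left_inj] at hrow hcol
    obtain ⟨k, hk, rfl⟩ := ih F hrow hcol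
    refine ⟨Pi.single π 1 + k, ?_, ?_⟩
    · simp [sum_add_distrib, hk, add_comm]
    · simp [add_smul, sum_add_distrib, Pi.single_apply, ite_smul, -nsmul_eq_mul]

end PermMatrix

section DetPow

variable {n R : Type*} [Fintype n] [DecidableEq n] [CommRing R]

theorem det_mvPolynomialX_eq_sum_monomial :
    (mvPolynomialX n n R).det =
      ∑ π : Perm n, monomial (matrixExponent (π.permMatrix ℕ)) ((Perm.sign π : ℤ) : R) := by
  rw [← det_transpose, det_apply']
  refine sum_congr rfl fun π _ => ?_
  simp [monomial_matrixExponent, pow_ite]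

theorem coeff_det_mvPolynomialX_pow (d : ℕ) (E : Matrix n n ℕ) :
    coeff (matrixExponent E) ((mvPolynomialX n n R).det ^ d) =
      ∑ k ∈ piAntidiag univ d with ∑ π, k π • π.permMatrix ℕ = E,
        (Nat.multinomial univ k * ∏ π, ((Perm.sign π : ℤ) : R) ^ k π) := by
  simp only [det_mvPolynomialX_eq_sum_monomial, sum_pow_eq_sum_piAntidiag, monomial_pow,
    ← monomial_sum_prod, ← map_nsmul, ← map_sum, ← C_eq_coe_nat, coeff_sum, coeff_C_mul,
    coeff_monomial, EmbeddingLike.apply_eq_iff_eq, mul_ite, mul_zero, sum_filter]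

theorem sum_col_eq_of_coeff_det_mvPolynomialX_pow_ne_zero {d : ℕ} {E : Matrix n n ℕ}
    (h : coeff (matrixExponent E) ((mvPolynomialX n n R).det ^ d) ≠ 0) (j : n) :
    ∑ i, E i j = d := by
  rw [coeff_det_mvPolynomialX_pow] at h
  obtain ⟨k, hk, -⟩ := exists_ne_zero_of_sum_ne_zero h
  obtain ⟨hkd, rfl⟩ := mem_filter.1 hk
  exact (sum_col_sum_smul_permMatrix k j).trans (mem_piAntidiag.1 hkd).1

theorem coeff_det_mvPolynomialX_pow_submatrix (τ : Perm n) (d : ℕ) (E : Matrix n n ℕ) :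
    coeff (matrixExponent (E.submatrix τ id)) ((mvPolynomialX n n R).det ^ d) =
      ((Perm.sign τ : ℤ) : R) ^ d * coeff (matrixExponent E) ((mvPolynomialX n n R).det ^ d) := by
  let e : n × n ≃ n × n := τ.prodCongr (Equiv.refl n)
  have hrename : rename e (mvPolynomialX n n R).det =
      C ((Perm.sign τ : ℤ) : R) * (mvPolynomialX n n R).det := by
    rw [AlgHom.map_det, map_intCast, ← det_permute]
    congr 1
    ext1 i j
    simp [e]
  have hmap : Finsupp.mapDomain e (matrixExponent (E.submatrix τ id)) = matrixExponent E := by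
    ext ⟨i, j⟩
    simp only [Finsupp.mapDomain_equiv_apply, matrixExponent_apply]
    simp [e]
  rw [← coeff_rename_mapDomain e e.injective, hmap, map_pow, hrename, mul_pow, ← C_pow,
    coeff_C_mul]

theorem coeff_det_mvPolynomialX_pow_eq_zero_of_row_eq [NoZeroDivisors R] [CharZero R]
    {d : ℕ} (hd : Odd d) {E : Matrix n n ℕ} {i j : n} (hij : i ≠ j) (hE : E i = E j) :
    coeff (matrixExponent E) ((mvPolynomialX n n R).det ^ d) = 0 := by
  have hswap : E.submatrix (swap i j) id = E := by
    ext r c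
    grind [submatrix_apply]
  have h := coeff_det_mvPolynomialX_pow_submatrix (R := R) (swap i j) d E
  rw [hswap, Perm.sign_swap hij] at h
  simpa [hd.neg_one_pow, self_eq_neg] using h

end DetPow

theorem exists_filter_apply_eq_pair {x y : Fin 3} (hxy : x ≠ y) :
    ∃ i, ∀ π : Perm (Fin 3), ({ρ | ρ i = π i} : Finset (Perm (Fin 3))) = {π, π * swap x y} := by
  decide +revert

theorem eq_sign_mul_of_sum_smul_permMatrix_eq_zero {R : Type*} [Ring R] (a : Perm (Fin 3) → R)
    (ha : ∑ π, a π • π.permMatrix R = 0) (π : Perm (Fin 3)) : a π = (Perm.sign π : ℤ) * a 1 := by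
  induction π using Perm.swap_induction_on' with
  | one => simp
  | mul_swap π x y hxy ih =>
    obtain ⟨i, hi⟩ := exists_filter_apply_eq_pair hxy
    have hne : π ≠ π * swap x y := by simpa [eq_comm, swap_eq_one_iff] using hxy
    have hsum : a π + a (π * swap x y) = 0 := by
      rw [← sum_pair hne, ← hi, ← sum_smul_permMatrix_apply, ha, Matrix.zero_apply]
    rw [← neg_eq_of_add_eq_zero_right hsum, ih, Perm.sign_mul, Perm.sign_swap hxy]
    simp

theorem eq_of_sum_smul_permMatrix_eq {k l : Perm (Fin 3) → ℕ}
    (h : ∑ π, k π • π.permMatrix ℕ = ∑ π, l π • π.permMatrix ℕ)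
    {i j : Fin 3} (hij : (∑ π, k π • π.permMatrix ℕ) i j = 0) : k = l := by
  have hkl : ∑ π, ((k π : ℤ) - l π) • π.permMatrix ℤ = 0 := by
    ext i j
    have hentry := congr_fun₂ h i j
    rw [sum_smul_permMatrix_apply, sum_smul_permMatrix_apply] at hentry
    rw [sum_smul_permMatrix_apply, sum_sub_distrib]
    exact sub_eq_zero.2 (mod_cast hentry)
  have hsign := eq_sign_mul_of_sum_smul_permMatrix_eq_zero _ hkl
  have hk : k (swap i j) = 0 := by
    rw [sum_smul_permMatrix_apply, sum_eq_zero_iff] at hij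
    exact hij _ (by simp)
  have hl : l (swap i j) = 0 := by
    rw [h, sum_smul_permMatrix_apply, sum_eq_zero_iff] at hij
    exact hij _ (by simp)
  have hone : (k 1 : ℤ) - l 1 = 0 := by
    simpa [hk, hl] using (hsign (swap i j)).symm
  funext π
  simpa [hone, sub_eq_zero] using hsign π

theorem exists_apply_eq_zero_of_sum_eq_card {m n : Type*} [Fintype n] {E : Matrix m n ℕ}
    (hrow : ∀ i, ∑ j, E i j = Fintype.card n) (hE : E ≠ of fun _ _ => 1) : ∃ i j, E i j = 0 := by
  contrapose! hE
  ext i j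
  have hle : ∀ j ∈ univ, 1 ≤ E i j := fun j _ => Nat.one_le_iff_ne_zero.2 (hE i j)
  exact ((sum_eq_sum_iff_of_le hle).1 (by simp [hrow]) j (mem_univ j)).symm

theorem coeff_det_mvPolynomialX_pow_three_ne_zero_iff {R : Type*} [CommRing R]
    [NoZeroDivisors R] [CharZero R] {E : Matrix (Fin 3) (Fin 3) ℕ} (hrow : ∀ i, ∑ j, E i j = 3) :
    coeff (matrixExponent E) ((mvPolynomialX (Fin 3) (Fin 3) R).det ^ 3) ≠ 0 ↔
      (∀ j, ∑ i, E i j = 3) ∧ E ≠ of fun _ _ => 1 := by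
  refine ⟨fun h => ⟨sum_col_eq_of_coeff_det_mvPolynomialX_pow_ne_zero h, ?_⟩, ?_⟩
  · rintro rfl
    exact h (coeff_det_mvPolynomialX_pow_eq_zero_of_row_eq (by decide) zero_ne_one rfl)
  · rintro ⟨hcol, hE⟩
    obtain ⟨i, j, hij⟩ := exists_apply_eq_zero_of_sum_eq_card hrow hE
    obtain ⟨k, hkd, rfl⟩ := exists_sum_smul_permMatrix_eq 3 E hrow hcol
    have hunique : {l ∈ piAntidiag (univ : Finset (Perm (Fin 3))) 3 |
        ∑ π, l π • π.permMatrix ℕ = ∑ π, k π • π.permMatrix ℕ} = {k} := by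
      ext l
      simp only [mem_filter, mem_piAntidiag, mem_singleton]
      exact ⟨fun h => (eq_of_sum_smul_permMatrix_eq h.2.symm hij).symm,
        by rintro rfl; exact ⟨⟨hkd, fun _ _ => mem_univ _⟩, rfl⟩⟩
    rw [coeff_det_mvPolynomialX_pow, hunique, sum_singleton]
    refine mul_ne_zero (Nat.cast_ne_zero.2 (Nat.multinomial_pos _ _).ne') ?_
    exact prod_ne_zero_iff.2 fun π _ => pow_ne_zero _ (Int.cast_ne_zero.2 (Perm.sign π).ne_zero)

theorem trivector_nonzero_on_monomials_general {R : Type*} [CommRing R] [IsDomain R] [CharZero R]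
    (σ : MultilinearMap R (fun _ : Fin 3 => MvPolynomial (Fin 3) R) R)
    (hσ : ∀ u v w : Fin 3 → R,
      σ ![(∑ i, C (u i) * X i) ^ 3, (∑ i, C (v i) * X i) ^ 3, (∑ i, C (w i) * X i) ^ 3] =
        (Matrix.det (Matrix.of ![u, v, w])) ^ 3)
    (E : Fin 3 → Fin 3 → ℕ) (hdeg : ∀ r, E r 0 + E r 1 + E r 2 = 3) :
    σ (fun r => X 0 ^ E r 0 * X 1 ^ E r 1 * X 2 ^ E r 2) ≠ 0 ↔
      (∀ j, E 0 j + E 1 j + E 2 j = 3) ∧ ¬ (∀ r, E r = ![1, 1, 1]) := by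
  have hdet (w : Fin 3 → Fin 3 → R) : σ (fun r => (∑ j, C (w r j) * X j) ^ 3) =
      eval (fun p => w p.1 p.2) ((mvPolynomialX (Fin 3) (Fin 3) R).det ^ 3) := by
    rw [map_pow, eval_det_mvPolynomialX]
    convert hσ (w 0) (w 1) (w 2) using 3 with r
    · fin_cases r <;> rfl
    · ext i j; fin_cases i <;> rfl
  have hmon : (fun r => X 0 ^ E r 0 * X 1 ^ E r 1 * X 2 ^ E r 2 : Fin 3 → MvPolynomial (Fin 3) R) =
      fun r => ∏ j, X j ^ E r j := by
    simp only [Fin.prod_univ_three]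
  have hones : of E = of (fun _ _ => 1) ↔ ∀ r, E r = ![1, 1, 1] := by
    simp [funext_iff, Fin.forall_fin_succ]
  have hrow (r : Fin 3) : ∑ j, of E r j = 3 := (Fin.sum_univ_three _).trans (hdeg r)
  rw [hmon, map_prod_X_pow_ne_zero_iff σ 3 _ hdet E hrow,
    coeff_det_mvPolynomialX_pow_three_ne_zero_iff hrow, ne_eq, hones]
  simp only [of_apply, Fin.sum_univ_three]

/-- Let `σ₀` be the alternating trilinear form on `Sym³W₃` determined by
`σ₀(u³, v³, w³) = det(u,v,w)³`. For degree-3 monomials `m_r = x^{i_r} y^{j_r} z^{k_r}`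
(`r = 1, 2, 3`), one has `σ₀(m₁, m₂, m₃) ≠ 0` iff
`i₁+i₂+i₃ = j₁+j₂+j₃ = k₁+k₂+k₃ = 3` and not all three monomials equal `xyz`. -/
theorem trivector_nonzero_on_monomials
    (σ : MvPolynomial (Fin 3) ℂ [⋀^Fin 3]→ₗ[ℂ] ℂ)
    (hσ : ∀ u v w : Fin 3 → ℂ,
      σ ![cubePoly u, cubePoly v, cubePoly w] = (Matrix.det (Matrix.of ![u, v, w])) ^ 3)
    (E : Fin 3 → Fin 3 → ℕ) (hdeg : ∀ r, E r 0 + E r 1 + E r 2 = 3) :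
    σ (fun r => monPoly (E r)) ≠ 0 ↔
      (∀ j, E 0 j + E 1 j + E 2 j = 3) ∧ ¬ (∀ r, E r = ![1, 1, 1]) :=
  trivector_nonzero_on_monomials_general σ.toMultilinearMap hσ E hdeg
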